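/- Let $\Lambda_3 > 1$ and $t \in (0,1)$, and define $Q : (0,\infty) \to \mathbb{R}$ by $Q(y) = \frac{1-t}{2}(y-\Lambda_3)^2 + t\big(-\frac{1}{2y^2} - y\big)$. Then there exists a unique $a \in (0,\Lambda_3)$ with $Q'(a) = 0$; moreover $a \in (0,1)$, $Q$ is strictly increasing on $(0,a]$ and strictly decreasing on $[a,\Lambda_3]$. -/

import Mathlib

/-!
`Q'` is affine plus `t * y⁻³`, hence convex on `(0, ∞)`, and `Q' Λ₃ < 0`. A convex function that is
negative at `Λ₃` has at most one zero `a` to the left of `Λ₃`, being positive before `a` and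
negative between `a` and `Λ₃`. Such a zero exists in `(0, 1)`, since `Q'` tends to `∞` at `0` and
`Q' 1 = (1 - t) * (1 - Λ₃) < 0`.
-/

open Set

section ConvexOn

variable {𝕜 β : Type*} [Field 𝕜] [LinearOrder 𝕜] [IsStrictOrderedRing 𝕜]
  [AddCommGroup β] [LinearOrder β] [IsOrderedAddMonoid β] [Module 𝕜 β] [PosSMulStrictMono 𝕜 β]
  {s : Set 𝕜} {f : 𝕜 → β} {x y z : 𝕜}

theorem convexOn_mid_lt_left_of_right_lt_mid (hf : ConvexOn 𝕜 s f) (hx : x ∈ s) (hz : z ∈ s)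
    (hxy : x < y) (hyz : y < z) (h : f z < f y) : f y < f x :=
  hf.lt_left_of_right_lt hx hz (by rw [openSegment_eq_Ioo (hxy.trans hyz)]; exact ⟨hxy, hyz⟩) h

theorem convexOn_mid_lt_of_left_le_of_right_lt (hf : ConvexOn 𝕜 s f) (hx : x ∈ s) (hz : z ∈ s)
    (hxy : x < y) (hyz : y < z) {c : β} (hxc : f x ≤ c) (hzc : f z < c) : f y < c := by
  by_contra! hcy
  have hyx : f y < f x := convexOn_mid_lt_left_of_right_lt_mid hf hx hz hxy hyz (hzc.trans_le hcy)
  exact (hyx.trans_le hxc).not_ge hcy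

theorem convexOn_eq_of_map_eq_of_right_lt (hf : ConvexOn 𝕜 s f) (hx : x ∈ s) (hy : y ∈ s)
    (hz : z ∈ s) (hxz : x < z) (hyz : y < z) (h : f z < f x) (hxy : f x = f y) : x = y := by
  rcases lt_trichotomy x y with hlt | heq | hgt
  · exact absurd hxy (convexOn_mid_lt_left_of_right_lt_mid hf hx hz hlt hyz (hxy ▸ h)).ne'
  · exact heq
  · exact absurd hxy (convexOn_mid_lt_left_of_right_lt_mid hf hy hz hgt hxz h).ne

end ConvexOn

section ConvexDerivative

variable {s : Set ℝ} {f f' : ℝ → ℝ} {a b : ℝ}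

theorem strictMonoOn_inter_Iic_of_convexOn_deriv (hf : ∀ y ∈ s, HasDerivAt f (f' y) y)
    (hconv : ConvexOn ℝ s f') (hb : b ∈ s) (hab : a < b) (hfa : 0 ≤ f' a) (hfb : f' b < 0) :
    StrictMonoOn f (s ∩ Iic a) := by
  refine strictMonoOn_of_hasDerivWithinAt_pos (hconv.1.inter (convex_Iic a))
    (fun y hy ↦ (hf y hy.1).continuousAt.continuousWithinAt)
    (fun y hy ↦ (hf y (interior_subset hy).1).hasDerivWithinAt) fun y hy ↦ ?_
  rw [interior_inter, interior_Iic] at hy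
  exact hfa.trans_lt <|
    convexOn_mid_lt_left_of_right_lt_mid hconv (interior_subset hy.1) hb hy.2 hab (hfb.trans_le hfa)

theorem strictAntiOn_Icc_of_convexOn_deriv (hf : ∀ y ∈ s, HasDerivAt f (f' y) y)
    (hconv : ConvexOn ℝ s f') (ha : a ∈ s) (hb : b ∈ s) (hfa : f' a ≤ 0) (hfb : f' b < 0) :
    StrictAntiOn f (Icc a b) := by
  have hs : Icc a b ⊆ s := hconv.1.ordConnected.out ha hb
  refine strictAntiOn_of_hasDerivWithinAt_neg (convex_Icc a b)
    (fun y hy ↦ (hf y (hs hy)).continuousAt.continuousWithinAt)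
    (fun y hy ↦ (hf y (hs (interior_subset hy))).hasDerivWithinAt) fun y hy ↦ ?_
  rw [interior_Icc] at hy
  exact convexOn_mid_lt_of_left_le_of_right_lt hconv ha hb hy.1 hy.2 hfa hfb

end ConvexDerivative

/-- The interpolation `Q` with parameter `t` between the quadratic `(y - Λ)² / 2` and the Kepler
effective function `-1 / (2y²) - y`. -/
noncomputable def keplerInterpolation (Λ t y : ℝ) : ℝ :=
  (1 - t) / 2 * (y - Λ) ^ 2 + t * (-(1 / (2 * y ^ 2)) - y)

/-- The derivative `Q'` of `keplerInterpolation Λ t` away from `0`; the Kepler term is written as an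
integer power so that `convexOn_zpow` applies. -/
noncomputable def keplerInterpolationDeriv (Λ t y : ℝ) : ℝ :=
  (1 - t) * (y - Λ) + t * (y ^ (-3 : ℤ) - 1)

section KeplerInterpolation

variable {Λ t : ℝ}

theorem hasDerivAt_keplerInterpolation {y : ℝ} (hy : y ≠ 0) :
    HasDerivAt (keplerInterpolation Λ t) (keplerInterpolationDeriv Λ t y) y := by
  have hquad : HasDerivAt (fun y : ℝ ↦ (y - Λ) ^ 2) (2 * (y - Λ)) y := by
    simpa using ((hasDerivAt_id y).sub_const Λ).fun_pow 2
  have hkepler : HasDerivAt (fun y : ℝ ↦ -(1 / (2 * y ^ 2))) (y ^ (-3 : ℤ)) y := by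
    have hpow : (fun y : ℝ ↦ -(1 / (2 * y ^ 2))) = fun y ↦ -1 / 2 * y ^ (-2 : ℤ) := by
      ext y
      rw [zpow_neg, zpow_ofNat]
      ring
    rw [hpow]
    refine ((hasDerivAt_zpow (-2) y (.inl hy)).const_mul (-1 / 2)).congr_deriv ?_
    push_cast
    ring
  refine ((hquad.const_mul ((1 - t) / 2)).add
    ((hkepler.sub (hasDerivAt_id y)).const_mul t)).congr_deriv ?_
  rw [keplerInterpolationDeriv]
  ring

theorem convexOn_keplerInterpolationDeriv (ht : 0 ≤ t) :
    ConvexOn ℝ (Ioi 0) (keplerInterpolationDeriv Λ t) := by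
  have haffine : ConvexOn ℝ (Ioi 0) fun y : ℝ ↦ (1 - t) * y + (-(1 - t) * Λ - t) :=
    ((LinearMap.mulLeft ℝ (1 - t)).convexOn (convex_Ioi 0)).add_const _
  refine (haffine.add ((convexOn_zpow (-3)).smul ht)).congr fun y _ ↦ ?_
  simp only [keplerInterpolationDeriv, Pi.add_apply, smul_eq_mul]
  ring

theorem keplerInterpolationDeriv_self_neg (hΛ : 1 < Λ) (ht : 0 < t) :
    keplerInterpolationDeriv Λ t Λ < 0 := by
  have hpow : Λ ^ (-3 : ℤ) < 1 := zpow_lt_one_of_neg₀ hΛ (by norm_num)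
  rw [keplerInterpolationDeriv, sub_self, mul_zero, zero_add]
  exact mul_neg_of_pos_of_neg ht (sub_neg.2 hpow)

theorem exists_keplerInterpolationDeriv_eq_zero (hΛ : 1 < Λ) (ht0 : 0 < t) (ht1 : t < 1) :
    ∃ a ∈ Ioo (0 : ℝ) 1, keplerInterpolationDeriv Λ t a = 0 := by
  -- Multiplying `Q'` by `y³` removes the pole at `0` and keeps the zeros in `(0, 1)`.
  let p : ℝ → ℝ := fun y ↦ (1 - t) * (y - Λ) * y ^ 3 + t * (1 - y ^ 3)
  have hp : ContinuousOn p (Icc 0 1) := by fun_prop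
  have hp0 : 0 < p 0 := by simpa [p] using ht0
  have hp1 : p 1 < 0 := by
    simpa [p] using mul_neg_of_pos_of_neg (sub_pos.2 ht1) (sub_neg.2 hΛ)
  obtain ⟨a, ha, hpa⟩ := intermediate_value_Ioo' zero_le_one hp ⟨hp1, hp0⟩
  have ha0 : a ≠ 0 := ha.1.ne'
  have hmul : keplerInterpolationDeriv Λ t a * a ^ 3 = p a := by
    simp only [keplerInterpolationDeriv, p, zpow_neg, zpow_ofNat]
    field_simp
  exact ⟨a, ha, (mul_eq_zero_iff_right (pow_ne_zero 3 ha0)).1 (hmul.trans hpa)⟩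

end KeplerInterpolation

/-- The interpolation `Q(y) = (1-t)/2 (y-Λ₃)² + t(-1/(2y²) - y)` has, for `Λ₃ > 1` and
`t ∈ (0,1)`, a unique critical point `a ∈ (0,Λ₃)`; moreover `a ∈ (0,1)`, `Q` is strictly
increasing on `(0,a]` and strictly decreasing on `[a,Λ₃]`. -/
theorem stmt_9 (Λ3 t : ℝ) (hΛ3 : 1 < Λ3) (ht0 : 0 < t) (ht1 : t < 1) :
    ∃ a : ℝ, 0 < a ∧ a < Λ3 ∧
      deriv (fun y : ℝ => (1 - t) / 2 * (y - Λ3) ^ 2 + t * (-(1 / (2 * y ^ 2)) - y)) a = 0 ∧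
      (∀ a' : ℝ, 0 < a' → a' < Λ3 →
        deriv (fun y : ℝ => (1 - t) / 2 * (y - Λ3) ^ 2 + t * (-(1 / (2 * y ^ 2)) - y)) a' = 0 →
        a' = a) ∧
      a < 1 ∧
      StrictMonoOn (fun y : ℝ => (1 - t) / 2 * (y - Λ3) ^ 2 + t * (-(1 / (2 * y ^ 2)) - y))
        (Set.Ioc 0 a) ∧
      StrictAntiOn (fun y : ℝ => (1 - t) / 2 * (y - Λ3) ^ 2 + t * (-(1 / (2 * y ^ 2)) - y))
        (Set.Icc a Λ3) := by
  obtain ⟨a, ⟨ha0, ha1⟩, hQa⟩ := exists_keplerInterpolationDeriv_eq_zero hΛ3 ht0 ht1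
  have haΛ : a < Λ3 := ha1.trans hΛ3
  have hΛ0 : 0 < Λ3 := zero_lt_one.trans hΛ3
  have hderiv : ∀ y ∈ Ioi 0,
      HasDerivAt (keplerInterpolation Λ3 t) (keplerInterpolationDeriv Λ3 t y) y :=
    fun y hy ↦ hasDerivAt_keplerInterpolation (ne_of_gt hy)
  have hconv : ConvexOn ℝ (Ioi 0) (keplerInterpolationDeriv Λ3 t) :=
    convexOn_keplerInterpolationDeriv ht0.le
  have hQΛ : keplerInterpolationDeriv Λ3 t Λ3 < 0 := keplerInterpolationDeriv_self_neg hΛ3 ht0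
  refine ⟨a, ha0, haΛ, (hderiv a ha0).deriv.trans hQa, fun b hb0 hbΛ hb ↦ ?_, ha1, ?_, ?_⟩
  · have hQb : keplerInterpolationDeriv Λ3 t b = 0 := (hderiv b hb0).deriv.symm.trans hb
    exact convexOn_eq_of_map_eq_of_right_lt hconv hb0 ha0 hΛ0 hbΛ haΛ (hQb ▸ hQΛ)
      (hQb.trans hQa.symm)
  · rw [← Ioi_inter_Iic]
    exact strictMonoOn_inter_Iic_of_convexOn_deriv hderiv hconv hΛ0 haΛ hQa.ge hQΛ
  · exact strictAntiOn_Icc_of_convexOn_deriv hderiv hconv ha0 hΛ0 hQa.le hQΛ
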